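/- Let (X₁,T₁) and (X₂,T₂) be dynamical systems admitting a common subsystem (Y,T): that is, for i = 1,2 there is a closed T_i-invariant subset Y_i ⊆ X_i and a homeomorphism φ_i : Y → Y_i with φ_i ∘ T = T_i ∘ φ_i. Suppose there exists an ergodic T-invariant Borel probability measure μ on Y whose support contains at least two points, and suppose that for every pair of periodic points x₁ ∈ X₁ and x₂ ∈ X₂, the least period of x₁ (under T₁) and the least period of x₂ (under T₂) are coprime. Then the product system (X₁ × X₂, T₁ × T₂) does not have dense periodic measures. -/

import Mathlib

open MeasureTheory Topology

/-- A dynamical system `(X,T)` has *dense periodic measures* if the finitely supported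
`T`-invariant Borel probability measures are dense (in the weak-* topology) in the space of
all `T`-invariant Borel probability measures. -/
def DensePeriodicMeasures {X : Type*} [TopologicalSpace X] [MeasurableSpace X]
    [OpensMeasurableSpace X] (T : X → X) : Prop :=
  ∀ μ : ProbabilityMeasure X, μ.toMeasure.map T = μ.toMeasure →
    μ ∈ closure {ν : ProbabilityMeasure X |
      ν.toMeasure.map T = ν.toMeasure ∧ ∃ s : Finset X, ν.toMeasure ↑s = 1}

/-- The support of a measure. -/
def msupport {X : Type*} [TopologicalSpace X] [MeasurableSpace X]
    (μ : MeasureTheory.Measure X) : Set X :=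
  {x : X | ∀ O : Set X, IsOpen O → x ∈ O → 0 < μ O}


lemma finite_inv_aux {X₁ X₂ : Type*} [MeasurableSpace (X₁ × X₂)]
    [MeasurableSingletonClass (X₁ × X₂)]
    (T₁ : X₁ ≃ X₁) (T₂ : X₂ ≃ X₂)
    (hcoprime : ∀ (x₁ : X₁) (x₂ : X₂),
      (∃ n : ℕ, 0 < n ∧ (⇑T₁)^[n] x₁ = x₁) → (∃ n : ℕ, 0 < n ∧ (⇑T₂)^[n] x₂ = x₂) →
      Nat.Coprime (Function.minimalPeriod ⇑T₁ x₁) (Function.minimalPeriod ⇑T₂ x₂))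
    (hR : Measurable (fun p : X₁ × X₂ => (T₁ p.1, T₂ p.2)))
    (hS : Measurable (fun p : X₁ × X₂ => (T₁ p.1, p.2)))
    (ν : Measure (X₁ × X₂)) [IsProbabilityMeasure ν]
    (hν : ν.map (fun p : X₁ × X₂ => (T₁ p.1, T₂ p.2)) = ν)
    (s : Finset (X₁ × X₂)) (hs : ν ↑s = 1) :
    ν.map (fun p : X₁ × X₂ => (T₁ p.1, p.2)) = ν := by
  classical
  set R : X₁ × X₂ → X₁ × X₂ := fun p => (T₁ p.1, T₂ p.2) with hRdef
  set S : X₁ × X₂ → X₁ × X₂ := fun p => (T₁ p.1, p.2) with hSdef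
  have hRinj : Function.Injective R := by
    rintro ⟨a, b⟩ ⟨c, d⟩ h
    simpa [hRdef] using h
  have hSinj : Function.Injective S := by
    rintro ⟨a, b⟩ ⟨c, d⟩ h
    simpa [hSdef] using h
  have hsm : MeasurableSet (↑s : Set (X₁ × X₂)) := s.measurableSet
  have hsc : ν (↑s : Set (X₁ × X₂))ᶜ = 0 := (prob_compl_eq_zero_iff hsm).2 hs
  have hstep : ∀ x, ν {R x} = ν {x} := by
    intro x
    conv_lhs => rw [← hν]
    rw [Measure.map_apply hR (measurableSet_singleton _)]
    congr 1
    ext y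
    simp [hRinj.eq_iff]
  have hiter : ∀ n x, ν {R^[n] x} = ν {x} := by
    intro n x
    induction n with
    | zero => rfl
    | succ n ih => rw [Function.iterate_succ_apply', hstep, ih]
  have hRit : ∀ n (x : X₁ × X₂), R^[n] x = (T₁^[n] x.1, T₂^[n] x.2) := by
    intro n x
    induction n with
    | zero => rfl
    | succ n ih => rw [Function.iterate_succ_apply', ih, Function.iterate_succ_apply', Function.iterate_succ_apply']
  have hle : ∀ x, ν {x} ≤ ν {S x} := by
    intro x
    by_cases hx : ν {x} = 0
    · simp [hx]
    have hmem : ∀ n, R^[n] x ∈ s := by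
      intro n
      by_contra h
      apply hx
      rw [← hiter n x]
      exact measure_mono_null (by simpa using h) hsc
    have hper : ∃ n, 0 < n ∧ R^[n] x = x := by
      have hni : ¬ Function.Injective (fun n : ℕ => (⟨R^[n] x, hmem n⟩ : s)) :=
        not_injective_infinite_finite _
      rw [Function.Injective] at hni
      push Not at hni
      obtain ⟨a, b, hab, hne⟩ := hni
      have hab' : R^[a] x = R^[b] x := by simpa using hab
      have key : ∀ a b, a < b → R^[a] x = R^[b] x → ∃ n, 0 < n ∧ R^[n] x = x := by
        intro a b hlt h
        refine ⟨b - a, by omega, ?_⟩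
        apply hRinj.iterate a
        rw [← Function.iterate_add_apply, Nat.add_sub_cancel' hlt.le, h]
      rcases lt_or_gt_of_ne hne with h | h
      · exact key a b h hab'
      · exact key b a h hab'.symm
    obtain ⟨n, hn, hnx⟩ := hper
    rw [hRit] at hnx
    have h1 : T₁^[n] x.1 = x.1 := congrArg Prod.fst hnx
    have h2 : T₂^[n] x.2 = x.2 := congrArg Prod.snd hnx
    obtain ⟨k, hk1, hk2⟩ := Nat.chineseRemainder (hcoprime x.1 x.2 ⟨n, hn, h1⟩ ⟨n, hn, h2⟩) 1 0
    have e1 : T₁^[k] x.1 = T₁ x.1 := by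
      rw [← Function.iterate_mod_minimalPeriod_eq, hk1, Function.iterate_mod_minimalPeriod_eq]
      rfl
    have e2 : T₂^[k] x.2 = x.2 := by
      rw [← Function.iterate_mod_minimalPeriod_eq, hk2, Function.iterate_mod_minimalPeriod_eq]
      rfl
    have : S x = R^[k] x := by rw [hRit, e1, e2]
    rw [this, hiter]
  have hmle : ν.map S ≤ ν := by
    refine Measure.le_iff.2 fun A hA => ?_
    rw [Measure.map_apply hS hA]
    set t := s.filter (fun x => S x ∈ A) with ht
    calc ν (S ⁻¹' A) ≤ ν ((↑t : Set (X₁ × X₂)) ∪ (↑s : Set (X₁ × X₂))ᶜ) := by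
          apply measure_mono
          intro x hx
          by_cases h : x ∈ s
          · left
            simp only [ht, Finset.coe_filter, Set.mem_ofPred_eq]
            exact ⟨h, hx⟩
          · right
            simpa using h
      _ ≤ ν ↑t + ν (↑s : Set (X₁ × X₂))ᶜ := measure_union_le _ _
      _ = ∑ x ∈ t, ν {x} := by rw [hsc, add_zero, sum_measure_singleton]
      _ ≤ ∑ x ∈ t, ν {S x} := Finset.sum_le_sum fun x _ => hle x
      _ = ∑ y ∈ t.image S, ν {y} := by rw [Finset.sum_image (fun a _ b _ h => hSinj h)]
      _ = ν ↑(t.image S) := sum_measure_singleton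
      _ ≤ ν A := by
          apply measure_mono
          intro y hy
          simp only [Finset.coe_image, Set.mem_image, Finset.mem_coe] at hy
          obtain ⟨x, hx, rfl⟩ := hy
          exact (Finset.mem_filter.1 hx).2
  have : IsProbabilityMeasure (ν.map S) := Measure.isProbabilityMeasure_map hS.aemeasurable
  exact Measure.eq_of_le_of_isProbabilityMeasure hmle

/-- If two systems `(X₁,T₁)`, `(X₂,T₂)` have a common subsystem `(Y,T)` carrying an ergodic
invariant measure supported on at least two points, and the least periods of periodic points
of `X₁` are coprime to those of `X₂`, then the product system has no dense periodic
measures. -/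
theorem product_not_densePeriodicMeasures_of_common_subsystem
    {X₁ X₂ Y : Type*}
    [TopologicalSpace X₁] [CompactSpace X₁] [TopologicalSpace.MetrizableSpace X₁]
    [SecondCountableTopology X₁] [MeasurableSpace X₁] [BorelSpace X₁]
    [TopologicalSpace X₂] [CompactSpace X₂] [TopologicalSpace.MetrizableSpace X₂]
    [SecondCountableTopology X₂] [MeasurableSpace X₂] [BorelSpace X₂]
    [TopologicalSpace Y] [CompactSpace Y] [TopologicalSpace.MetrizableSpace Y]
    [MeasurableSpace Y] [BorelSpace Y]
    (T₁ : X₁ ≃ₜ X₁) (T₂ : X₂ ≃ₜ X₂) (T : Y ≃ₜ Y)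
    (Y₁ : Set X₁) (Y₂ : Set X₂) (hY₁closed : IsClosed Y₁) (hY₂closed : IsClosed Y₂)
    (hY₁inv : ⇑T₁ '' Y₁ = Y₁) (hY₂inv : ⇑T₂ '' Y₂ = Y₂)
    (φ₁ : Y ≃ₜ Y₁) (φ₂ : Y ≃ₜ Y₂)
    (hφ₁ : ∀ y : Y, (φ₁ (T y) : X₁) = T₁ (φ₁ y : X₁))
    (hφ₂ : ∀ y : Y, (φ₂ (T y) : X₂) = T₂ (φ₂ y : X₂))
    (μ : Measure Y) (hμp : IsProbabilityMeasure μ) (hμerg : Ergodic ⇑T μ)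
    (hsupp : ∃ p q : Y, p ∈ msupport μ ∧ q ∈ msupport μ ∧ p ≠ q)
    (hcoprime : ∀ (x₁ : X₁) (x₂ : X₂),
      (∃ n : ℕ, 0 < n ∧ (⇑T₁)^[n] x₁ = x₁) → (∃ n : ℕ, 0 < n ∧ (⇑T₂)^[n] x₂ = x₂) →
      Nat.Coprime (Function.minimalPeriod ⇑T₁ x₁) (Function.minimalPeriod ⇑T₂ x₂)) :
    ¬ DensePeriodicMeasures (fun p : X₁ × X₂ => (T₁ p.1, T₂ p.2)) := by
  intro hD
  let := TopologicalSpace.metrizableSpaceMetric X₁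
  let := TopologicalSpace.metrizableSpaceMetric X₂
  set R : X₁ × X₂ → X₁ × X₂ := fun p => (T₁ p.1, T₂ p.2) with hRdef
  set S : X₁ × X₂ → X₁ × X₂ := fun p => (T₁ p.1, p.2) with hSdef
  have hRc : Continuous R := by fun_prop
  have hSc : Continuous S := by fun_prop
  let g : Y → X₁ × X₂ := fun y => ((φ₁ y : X₁), (φ₂ y : X₂))
  have hg : Continuous g := by fun_prop
  have hRg : ∀ y, R (g y) = g (T y) := fun y => by simp [hRdef, g, hφ₁, hφ₂]
  let l : ProbabilityMeasure (X₁ × X₂) :=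
    ⟨μ.map g, Measure.isProbabilityMeasure_map hg.measurable.aemeasurable⟩
  have hl : l.toMeasure = μ.map g := rfl
  have hlR : l.toMeasure.map R = l.toMeasure := by
    rw [hl, Measure.map_map hRc.measurable hg.measurable]
    have : R ∘ g = g ∘ T := funext hRg
    rw [this, ← Measure.map_map hg.measurable T.continuous.measurable,
      hμerg.toMeasurePreserving.map_eq]
  have hcl := hD l hlR
  have hclosed : IsClosed {ν : ProbabilityMeasure (X₁ × X₂) |
      ν.map hSc.measurable.aemeasurable = ν} :=
    isClosed_eq (ProbabilityMeasure.continuous_map hSc) continuous_id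
  have hlS : l.map hSc.measurable.aemeasurable = l := by
    refine closure_minimal ?_ hclosed hcl
    rintro ν ⟨hν, s, hs⟩
    apply Subtype.ext
    exact finite_inv_aux T₁.toEquiv T₂.toEquiv hcoprime hRc.measurable hSc.measurable
      ν.toMeasure hν s hs
  have hlS' : (μ.map g).map S = μ.map g := congrArg Subtype.val hlS
  have hΓ : IsClosed (Set.range g) := (isCompact_range hg).isClosed
  have hT : ∀ᵐ y ∂μ, T y = y := by
    have h1 : ∀ᵐ x ∂(μ.map g), x ∈ Set.range g := by
      refine (ae_map_iff hg.measurable.aemeasurable (p := fun x => x ∈ Set.range g)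
        hΓ.measurableSet).2 ?_
      exact Filter.Eventually.of_forall fun y => ⟨y, rfl⟩
    rw [← hlS', Measure.map_map hSc.measurable hg.measurable] at h1
    have h2 := (ae_map_iff (hSc.comp hg).measurable.aemeasurable
      (p := fun x => x ∈ Set.range g) hΓ.measurableSet).1 h1
    filter_upwards [h2] with y ⟨z, hz⟩
    have e1 : (φ₁ z : X₁) = φ₁ (T y) := by
      rw [hφ₁]; exact congrArg Prod.fst hz
    have e2 : (φ₂ z : X₂) = φ₂ y := congrArg Prod.snd hz
    have e1' := φ₁.injective (Subtype.ext e1)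
    have e2' := φ₂.injective (Subtype.ext e2)
    rw [← e1', e2']
  obtain ⟨p, q, hp, hq, hpq⟩ := hsupp
  obtain ⟨U, V, hU, hV, hpU, hqV, hUV⟩ := t2_separation hpq
  have key : ∀ U : Set Y, IsOpen U → 0 < μ U → ∀ᵐ y ∂μ, y ∈ U := by
    intro U hU hpos
    have hinv : T ⁻¹' U =ᵐ[μ] U := by
      filter_upwards [hT] with y hy
      apply propext
      change T y ∈ U ↔ y ∈ U
      rw [hy]
    rcases hμerg.quasiErgodic.ae_empty_or_univ₀ hU.measurableSet.nullMeasurableSet hinv with h | h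
    · rw [ae_eq_empty] at h
      exact absurd h hpos.ne'
    · exact Filter.eventuallyEq_univ.1 h
  have : ∀ᵐ y ∂μ, False := by
    filter_upwards [key U hU (hp U hU hpU), key V hV (hq V hV hqV)] with y h1 h2
    exact Set.disjoint_left.1 hUV h1 h2
  obtain ⟨y, hy⟩ := this.exists
  exact hy
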